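/- (Proposition 2.) The function S : ℝ → ℝ defined by S(t₂) = g₁·(μ·F₁ + σ₁·f₁)·Φ((μ−t₂)/σ₂) + g₂·(μ·Φ((μ−t₂)/σ₂) + σ₂·φ((μ−t₂)/σ₂))·F₁ attains a strict global maximum at the unique point t₂⁰ = −(g₁/g₂)·(μ + σ₁·f₁/F₁); that is, S(t₂) < S(t₂⁰) for all t₂ ≠ t₂⁰. -/

import Mathlib

open Real

/-- Density of the standard normal distribution. -/
noncomputable def stdPdf (y : ℝ) : ℝ := (Real.sqrt (2 * Real.pi))⁻¹ * Real.exp (-(y ^ 2) / 2)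

/-- Cumulative distribution function of the standard normal distribution. -/
noncomputable def stdCdf (y : ℝ) : ℝ := ∫ x in Set.Iic y, stdPdf x

lemma stdPdf_pos' (y : ℝ) : 0 < stdPdf y := by
  unfold stdPdf; positivity

lemma stdPdf_cont' : Continuous stdPdf := by
  unfold stdPdf; fun_prop

lemma stdPdf_int' : MeasureTheory.Integrable stdPdf := by
  have h := (integrable_exp_neg_mul_sq (b := 1/2) (by norm_num)).const_mul (Real.sqrt (2 * Real.pi))⁻¹
  refine h.congr (Filter.Eventually.of_forall fun x => ?_)
  simp only [stdPdf]
  congr 2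
  ring

lemma stdCdf_pos' (y : ℝ) : 0 < stdCdf y := by
  unfold stdCdf
  rw [MeasureTheory.setIntegral_pos_iff_support_of_nonneg_ae]
  · have : Function.support stdPdf = Set.univ := by
      ext x; simp [(stdPdf_pos' x).ne']
    rw [this]; simp
  · exact Filter.Eventually.of_forall fun x => (stdPdf_pos' x).le
  · exact stdPdf_int'.integrableOn

lemma stdCdf_deriv' (y : ℝ) : HasDerivAt stdCdf (stdPdf y) y := by
  have h : stdCdf = fun z => stdCdf 0 + ∫ x in (0:ℝ)..z, stdPdf x := by
    funext z
    have := intervalIntegral.integral_Iic_sub_Iic (μ := MeasureTheory.volume) (a := (0:ℝ)) (b := z)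
      stdPdf_int'.integrableOn stdPdf_int'.integrableOn
    unfold stdCdf
    linarith
  rw [h]
  exact (intervalIntegral.integral_hasDerivAt_right (stdPdf_cont'.intervalIntegrable _ _)
    (stdPdf_cont'.stronglyMeasurableAtFilter _ _) stdPdf_cont'.continuousAt).const_add _

lemma stdPdf_deriv' (y : ℝ) : HasDerivAt stdPdf (-y * stdPdf y) y := by
  have h1 : HasDerivAt (fun x : ℝ => -(x ^ 2) / 2) (-y) y := by
    have := ((hasDerivAt_pow 2 y).neg).div_const 2
    exact this.congr_deriv (by norm_num; ring)
  have h2 := h1.exp.const_mul (Real.sqrt (2 * Real.pi))⁻¹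
  exact HasDerivAt.congr_deriv (f := stdPdf) h2 (by unfold stdPdf; ring)

lemma h_max' (c u : ℝ) (hu : u ≠ c) :
    c * stdCdf u + stdPdf u < c * stdCdf c + stdPdf c := by
  have hd : ∀ x, HasDerivAt (fun v => c * stdCdf v + stdPdf v) ((c - x) * stdPdf x) x := by
    intro x
    exact (((stdCdf_deriv' x).const_mul c).add (stdPdf_deriv' x)).congr_deriv (by ring)
  have hc : Continuous (fun v => c * stdCdf v + stdPdf v) :=
    continuous_iff_continuousAt.2 fun x => (hd x).continuousAt
  rcases lt_or_gt_of_ne hu with h | h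
  · have hm := strictMonoOn_of_deriv_pos (convex_Iic c) hc.continuousOn (by
      intro x hx
      rw [interior_Iic] at hx
      rw [(hd x).deriv]
      exact mul_pos (sub_pos.2 hx) (stdPdf_pos' x))
    exact hm (Set.mem_Iic.2 h.le) (Set.mem_Iic.2 le_rfl) h
  · have hm := strictAntiOn_of_deriv_neg (convex_Ici c) hc.continuousOn (by
      intro x hx
      rw [interior_Ici] at hx
      rw [(hd x).deriv]
      exact mul_neg_of_neg_of_pos (sub_neg.2 hx) (stdPdf_pos' x))
    exact hm (Set.mem_Ici.2 le_rfl) (Set.mem_Ici.2 h.le) h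

/-- Proposition 2: under the unanimous acceptance group rule, the expected capital increment
of the whole society `S(t₂) = g₁·(μ·F₁ + σ₁·f₁)·Φ((μ−t₂)/σ₂) +
g₂·(μ·Φ((μ−t₂)/σ₂) + σ₂·φ((μ−t₂)/σ₂))·F₁` attains a strict global maximum at the
unique point `t₂⁰ = −(g₁/g₂)·(μ + σ₁·f₁/F₁)`. -/
theorem society_max_unanimous_acceptance
    (μ σ : ℝ) (hσ : 0 < σ) (g₁ g₂ : ℕ) (hg₁ : 1 ≤ g₁) (hg₂ : 1 ≤ g₂) (t₁ : ℝ)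
    (σ₁ σ₂ : ℝ) (hσ₁ : σ₁ = σ / Real.sqrt g₁) (hσ₂ : σ₂ = σ / Real.sqrt g₂)
    (F₁ f₁ : ℝ) (hF₁ : F₁ = stdCdf ((μ - t₁) / σ₁)) (hf₁ : f₁ = stdPdf ((μ - t₁) / σ₁))
    (S : ℝ → ℝ)
    (hS : S = fun t₂ => (g₁ : ℝ) * (μ * F₁ + σ₁ * f₁) * stdCdf ((μ - t₂) / σ₂) +
      (g₂ : ℝ) * (μ * stdCdf ((μ - t₂) / σ₂) + σ₂ * stdPdf ((μ - t₂) / σ₂)) * F₁) :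
    ∀ t₂ : ℝ, t₂ ≠ -((g₁ : ℝ) / g₂) * (μ + σ₁ * f₁ / F₁) →
      S t₂ < S (-((g₁ : ℝ) / g₂) * (μ + σ₁ * f₁ / F₁)) := by
  intro t₂ ht
  have hF : 0 < F₁ := hF₁ ▸ stdCdf_pos' _
  have hg : (0:ℝ) < g₂ := by exact_mod_cast hg₂
  have hs : 0 < σ₂ := by rw [hσ₂]; positivity
  have key : ∀ t, S t = (g₂ * F₁ * σ₂) *
      (((μ - (-((g₁ : ℝ) / g₂) * (μ + σ₁ * f₁ / F₁))) / σ₂) * stdCdf ((μ - t) / σ₂)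
        + stdPdf ((μ - t) / σ₂)) := by
    intro t
    rw [hS]
    dsimp only
    generalize stdCdf ((μ - t) / σ₂) = a
    generalize stdPdf ((μ - t) / σ₂) = b
    field_simp
    ring
  rw [key, key]
  refine mul_lt_mul_of_pos_left (h_max' _ _ ?_) (by positivity)
  intro h
  apply ht
  rw [div_left_inj' hs.ne'] at h
  linarith
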